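/- arXiv:2505.22384 — 2 statements merged into one kernel-verified Lean document; each statement's English description precedes it below -/
import Mathlib

section
/- Let G be a finite simple graph (every edge has weight 1), U a vertex cover of G, I = V(G) ∖ U, 𝒞 ≥ 1, and t = |U| · 𝒞 + 𝒞. Let H be the bipartite graph with vertex classes U × {1, …, t} and I in which (u, ℓ) is adjacent to y ∈ I if and only if uy is an edge of G. Let M be a maximum matching of H and suppose w ∈ I is not covered by M. Then the maximum value of a 𝒞-partition of G equals the maximum value of a 𝒞-partition of the induced subgraph G − w obtained by deleting the vertex w. -/
open scoped Classical

/-- The number of edges of `G` with both endpoints in `Q` (unweighted value of a part). -/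
noncomputable def partVal {V : Type*} [DecidableEq V] (G : SimpleGraph V)
    (Q : Finset V) : ℕ :=
  (Q.sym2.filter (fun e => e ∈ G.edgeSet)).card

/-- The (unweighted) value of a partition `P`: the number of edges of `G` with
both endpoints in a common part of `P`. -/
noncomputable def pVal {V : Type*} [Fintype V] [DecidableEq V] (G : SimpleGraph V)
    (P : Finpartition (Finset.univ : Finset V)) : ℕ :=
  ∑ Q ∈ P.parts, partVal G Q

/-!
Write `C = k + 1`. By maximality of `M`, the set of matched vertices of `I` together with `w` cannot
be matched into the slots `U × {1, …, t}`, so Hall's condition fails for some subset, which must be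
of the form `B ∪ {w}` with `B` matched. By cardinality the slots adjacent to `B ∪ {w}` are exactly
the partners of `B`. Hence every neighbor `u` of `B ∪ {w}` in `G` has all of its `t ≥ k` slots
matched into `B`, which gives disjoint stars with `k` leaves in `B`, one centered at each such `u`.

Given an optimal `C`-partition, turn these stars into parts. Every edge meeting a star contains a
center, since `I` is independent and all neighbors of `B` are centers. Each center was in at most
`k` edges inside parts, and its star now contributes `k`, so the value does not drop. The neighbors
of `w` are now all in parts not containing `w`, so `w` can be deleted without loss.
-/

open Finset SimpleGraph

section Coloring

variable {V W α : Type*}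

/-- The monochromatic subgraph: the edges of `G` whose endpoints have the same color under `f`. A
vertex partition is encoded by the coloring sending a vertex to its part, so the value of the
partition is the number of monochromatic edges. -/
def monoSubgraph (G : SimpleGraph V) (f : V → α) : SimpleGraph V where
  Adj x y := G.Adj x y ∧ f x = f y
  symm := ⟨fun _ _ h ↦ ⟨h.1.symm, h.2.symm⟩⟩
  loopless := ⟨fun _ h ↦ G.loopless.irrefl _ h.1⟩

/-- A coloring, not necessarily proper, whose color classes have at most `C` vertices; it encodes a
`C`-partition. -/
def IsBoundedColoring [Fintype V] [DecidableEq α] (C : ℕ) (f : V → α) : Prop :=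
  ∀ a, #{x | f x = a} ≤ C

/-- The maximum value of a `C`-partition of `G`. The supremum is over an empty set, hence `0`, when
`C = 0` and `V` is nonempty. -/
noncomputable def maxPVal [Fintype V] [DecidableEq V] (G : SimpleGraph V) (C : ℕ) : ℕ :=
  sSup {v | ∃ P : Finpartition (univ : Finset V), (∀ Q ∈ P.parts, #Q ≤ C) ∧ pVal G P = v}

theorem monoSubgraph_adj {G : SimpleGraph V} {f : V → α} {x y : V} :
    (monoSubgraph G f).Adj x y ↔ G.Adj x y ∧ f x = f y :=
  Iff.rfl

theorem IsBoundedColoring.of_injective [Fintype V] [DecidableEq α] {C : ℕ} (hC : 1 ≤ C) {f : V → α}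
    (hf : Function.Injective f) : IsBoundedColoring C f := fun a ↦
  (card_le_one.2 fun x hx y hy ↦ hf <| by simp_all).trans hC

variable [Fintype V]

theorem IsBoundedColoring.degree_monoSubgraph_le [DecidableEq α] {k : ℕ} {f : V → α}
    (hf : IsBoundedColoring (k + 1) f) (G : SimpleGraph V) (u : V) :
    (monoSubgraph G f).degree u ≤ k := by
  have hsub : (monoSubgraph G f).neighborFinset u ⊆ ({x | f x = f u} : Finset V).erase u := by
    intro x hx
    rw [mem_neighborFinset, monoSubgraph_adj] at hx
    simp [hx.1.ne', hx.2]
  have hle := card_le_card hsub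
  rw [card_neighborFinset_eq_degree, card_erase_of_mem (by simp)] at hle
  have := hf (f u)
  lia

theorem IsBoundedColoring.card_filter_exists_mem_edgeFinset_le [DecidableEq V] [DecidableEq α]
    {k : ℕ} {f : V → α} (hf : IsBoundedColoring (k + 1) f) (G : SimpleGraph V) (X : Finset V) :
    #{e ∈ (monoSubgraph G f).edgeFinset | ∃ u ∈ X, u ∈ e} ≤ #X * k := by
  calc #{e ∈ (monoSubgraph G f).edgeFinset | ∃ u ∈ X, u ∈ e}
      ≤ #(X.biUnion fun u ↦ (monoSubgraph G f).incidenceFinset u) :=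
        card_le_card fun e he ↦ by
          simpa [incidenceSet, ← and_assoc, and_comm, and_left_comm] using he
    _ ≤ #X * k := card_biUnion_le_card_mul _ _ _ fun u _ ↦ by
        rw [card_incidenceFinset_eq_degree]
        exact hf.degree_monoSubgraph_le G u

section Finpartition

variable [DecidableEq V]

theorem pVal_eq_card_edgeFinset_monoSubgraph (G : SimpleGraph V)
    (P : Finpartition (univ : Finset V)) :
    pVal G P = #(monoSubgraph G P.part).edgeFinset := by
  have hdisj : (P.parts : Set (Finset V)).PairwiseDisjoint
      fun Q ↦ Q.sym2.filter (· ∈ G.edgeSet) := by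
    intro Q hQ R hR hne
    refine Finset.disjoint_left.2 fun e heQ heR ↦ hne ?_
    induction e with | _ x y
    simp only [mem_filter, mk_mem_sym2_iff] at heQ heR
    exact P.eq_of_mem_parts hQ hR heQ.1.1 heR.1.1
  simp only [pVal, partVal]
  rw [← card_biUnion hdisj]
  congr 1
  ext e
  induction e with | _ x y
  have hmem : P.part x = P.part y ↔ ∃ Q ∈ P.parts, x ∈ Q ∧ y ∈ Q := by
    rw [← P.mem_part_iff_part_eq_part (mem_univ x) (mem_univ y), P.mem_part_iff_exists]
  simp only [mem_biUnion, mem_filter, mk_mem_sym2_iff, mem_edgeSet, mem_edgeFinset,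
    monoSubgraph_adj, hmem]
  tauto

theorem isBoundedColoring_part {C : ℕ} {P : Finpartition (univ : Finset V)}
    (hP : ∀ Q ∈ P.parts, #Q ≤ C) : IsBoundedColoring C P.part := by
  intro Q
  by_cases hQ : Q ∈ P.parts
  · simpa [P.part_eq_iff_mem hQ] using hP Q hQ
  · have hempty (x : V) : P.part x ≠ Q := fun hx ↦ hQ (hx ▸ P.part_mem.2 (mem_univ x))
    simp [hempty]

theorem IsBoundedColoring.exists_finpartition [DecidableEq α] {C : ℕ} {f : V → α}
    (hf : IsBoundedColoring C f) (G : SimpleGraph V) :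
    ∃ P : Finpartition (univ : Finset V),
      (∀ Q ∈ P.parts, #Q ≤ C) ∧ pVal G P = #(monoSubgraph G f).edgeFinset := by
  let P := Finpartition.ofSetoid (Setoid.ker f)
  have hmem (x y : V) : y ∈ P.part x ↔ f x = f y := Finpartition.mem_part_ofSetoid_iff_rel
  refine ⟨P, fun Q hQ ↦ ?_, ?_⟩
  · obtain ⟨x, hx⟩ := P.nonempty_of_mem_parts hQ
    rw [← P.part_eq_of_mem hQ hx]
    refine (card_le_card fun y hy ↦ ?_).trans (hf (f x))
    simpa using ((hmem x y).1 hy).symm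
  · have hpart (x y : V) : P.part x = P.part y ↔ f x = f y := by
      rw [← P.mem_part_iff_part_eq_part (mem_univ x) (mem_univ y), hmem, eq_comm]
    have hmono : monoSubgraph G P.part = monoSubgraph G f := by
      ext x y
      rw [monoSubgraph_adj, monoSubgraph_adj, hpart]
    rw [pVal_eq_card_edgeFinset_monoSubgraph, hmono]

theorem bddAbove_pVal (G : SimpleGraph V) (C : ℕ) :
    BddAbove {v | ∃ P : Finpartition (univ : Finset V),
      (∀ Q ∈ P.parts, #Q ≤ C) ∧ pVal G P = v} := by
  refine ⟨#G.edgeFinset, ?_⟩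
  rintro _ ⟨P, -, rfl⟩
  rw [pVal_eq_card_edgeFinset_monoSubgraph]
  exact card_le_card (edgeFinset_mono fun _ _ h ↦ h.1)

theorem IsBoundedColoring.card_edgeFinset_le_maxPVal [DecidableEq α] {C : ℕ} {f : V → α}
    (hf : IsBoundedColoring C f) (G : SimpleGraph V) :
    #(monoSubgraph G f).edgeFinset ≤ maxPVal G C := by
  obtain ⟨P, hP, hval⟩ := hf.exists_finpartition G
  exact le_csSup (bddAbove_pVal G C) ⟨P, hP, hval⟩

theorem exists_isBoundedColoring_card_edgeFinset_eq_maxPVal (G : SimpleGraph V) {C : ℕ}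
    (hC : 1 ≤ C) :
    ∃ f : V → Finset V, IsBoundedColoring C f ∧ #(monoSubgraph G f).edgeFinset = maxPVal G C := by
  have hid : IsBoundedColoring C (id : V → V) := .of_injective hC Function.injective_id
  obtain ⟨P₀, hP₀, -⟩ := hid.exists_finpartition G
  obtain ⟨P, hP, hval⟩ : maxPVal G C ∈ _ :=
    Nat.sSup_mem ⟨pVal G P₀, P₀, hP₀, rfl⟩ (bddAbove_pVal G C)
  exact ⟨P.part, isBoundedColoring_part hP,
    (pVal_eq_card_edgeFinset_monoSubgraph G P).symm.trans hval⟩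

theorem IsBoundedColoring.extend [Fintype W] [DecidableEq α] {C : ℕ} {f : W → α}
    (hf : IsBoundedColoring C f) (φ : W ↪ V) (hC : 1 ≤ C) :
    IsBoundedColoring C (Function.extend φ (Sum.inl ∘ f) Sum.inr : V → α ⊕ V) := by
  have hcolor (y : V) :
      (∃ x, φ x = y ∧ Function.extend φ (Sum.inl ∘ f) Sum.inr y = (Sum.inl (f x) : α ⊕ V)) ∨
      Function.extend φ (Sum.inl ∘ f) Sum.inr y = (Sum.inr y : α ⊕ V) := by
    by_cases hy : ∃ x, φ x = y
    · obtain ⟨x, rfl⟩ := hy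
      exact .inl ⟨x, rfl, φ.injective.extend_apply _ _ x⟩
    · exact .inr (Function.extend_apply' _ _ _ hy)
  rintro (a | v)
  · refine le_trans (card_le_card fun y hy ↦ ?_) ((card_map φ).trans_le (hf a))
    have := hcolor y
    simp only [mem_filter, mem_univ, true_and, mem_map] at hy ⊢
    grind
  · refine le_trans (card_le_card (t := {v}) fun y hy ↦ ?_) hC
    have := hcolor y
    simp only [mem_filter, mem_univ, true_and, mem_singleton] at hy ⊢
    grind

theorem maxPVal_mono_of_isContained [Fintype W] [DecidableEq W] {G : SimpleGraph V}
    {H : SimpleGraph W} (hHG : H ⊑ G) {C : ℕ} (hC : 1 ≤ C) : maxPVal H C ≤ maxPVal G C := by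
  obtain ⟨φ⟩ := hHG
  obtain ⟨f, hf, hval⟩ := exists_isBoundedColoring_card_edgeFinset_eq_maxPVal H hC
  let g : V → Finset W ⊕ V := Function.extend φ (Sum.inl ∘ f) Sum.inr
  have hgφ (x : W) : g (φ x) = Sum.inl (f x) := φ.injective.extend_apply _ _ x
  have hcopy : Copy (monoSubgraph H f) (monoSubgraph G g) :=
    ⟨⟨φ, fun h ↦ ⟨φ.toHom.map_adj h.1, (hgφ _).trans (h.2 ▸ (hgφ _).symm)⟩⟩, φ.injective⟩
  calc maxPVal H C = #(monoSubgraph H f).edgeFinset := hval.symm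
    _ ≤ #(monoSubgraph G g).edgeFinset := by
      rw [edgeFinset_card, edgeFinset_card]
      exact Fintype.card_le_of_embedding hcopy.mapEdgeSet
    _ ≤ maxPVal G C := (hf.extend φ.toEmbedding hC).card_edgeFinset_le_maxPVal G

end Finpartition

theorem IsBoundedColoring.card_edgeFinset_le_maxPVal_induce [DecidableEq α] {C : ℕ} {f : V → α}
    (hf : IsBoundedColoring C f) (G : SimpleGraph V) {s : Set V} [Fintype s] [DecidableEq s]
    (hs : (monoSubgraph G f).support ⊆ s) :
    #(monoSubgraph G f).edgeFinset ≤ maxPVal (G.induce s) C := by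
  have hfs : IsBoundedColoring C fun x : s ↦ f x := by
    intro a
    refine le_trans ?_ (hf a)
    exact card_le_card_of_injOn Subtype.val (by intro; simp) Subtype.val_injective.injOn
  calc #(monoSubgraph G f).edgeFinset
      = #(monoSubgraph (G.induce s) fun x : s ↦ f x).edgeFinset := by
        rw [← card_edgeFinset_induce_of_support_subset hs]
        congr!
    _ ≤ maxPVal (G.induce s) C := hfs.card_edgeFinset_le_maxPVal (G.induce s)

end Coloring

section Crown

variable {V α : Type*} [DecidableEq V] {G : SimpleGraph V} {k : ℕ} {X L : Finset V} {c : V → V}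

/-- A crown with head `X` and leaf set `L` in which every `u ∈ X` is the center of a star with
exactly `k` leaves, namely the `y ∈ L` with `c y = u`. -/
structure IsCrown (G : SimpleGraph V) (k : ℕ) (X L : Finset V) (c : V → V) :
    Prop where
  disjoint : Disjoint X L
  adj : ∀ y ∈ L, G.Adj y (c y)
  mem_of_adj : ∀ y ∈ L, ∀ x, G.Adj y x → x ∈ X
  card_leaves : ∀ u ∈ X, #{y ∈ L | c y = u} = k

/-- Recolors `f` so that the stars of a crown become color classes. -/
noncomputable def crownColoring (X L : Finset V) (c : V → V) (f : V → α) (x : V) : V ⊕ α :=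
  if x ∈ X then Sum.inl x else if x ∈ L then Sum.inl (c x) else Sum.inr (f x)

theorem crownColoring_of_mem_head {f : V → α} {x : V} (hx : x ∈ X) :
    crownColoring X L c f x = Sum.inl x :=
  if_pos hx

theorem crownColoring_of_notMem {f : V → α} {x : V} (hX : x ∉ X) (hL : x ∉ L) :
    crownColoring X L c f x = Sum.inr (f x) := by
  rw [crownColoring, if_neg hX, if_neg hL]

namespace IsCrown

theorem notMem_head (h : IsCrown G k X L c) {y : V} (hy : y ∈ L) : y ∉ X :=
  Finset.disjoint_right.1 h.disjoint hy

theorem center_mem (h : IsCrown G k X L c) {y : V} (hy : y ∈ L) : c y ∈ X :=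
  h.mem_of_adj y hy _ (h.adj y hy)

theorem crownColoring_of_mem_leaves (h : IsCrown G k X L c) {f : V → α} {y : V} (hy : y ∈ L) :
    crownColoring X L c f y = Sum.inl (c y) := by
  rw [crownColoring, if_neg (h.notMem_head hy), if_pos hy]

theorem card_image_star (h : IsCrown G k X L c) : #(L.image fun y ↦ s(y, c y)) = #X * k := by
  rw [card_image_of_injOn, card_eq_sum_card_fiberwise fun y hy ↦ h.center_mem hy,
    sum_const_nat h.card_leaves]
  intro y hy z hz hyz
  have := h.center_mem hy
  have := h.notMem_head hz
  grind

theorem monoSubgraph_crownColoring_adj_of_notMem (h : IsCrown G k X L c) {f : V → α} {x y : V}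
    (hxy : (monoSubgraph G f).Adj x y) (hx : x ∉ X) (hy : y ∉ X) :
    (monoSubgraph G (crownColoring X L c f)).Adj x y := by
  have hxL : x ∉ L := fun hxL ↦ hy (h.mem_of_adj x hxL y hxy.1)
  have hyL : y ∉ L := fun hyL ↦ hx (h.mem_of_adj y hyL x hxy.1.symm)
  rw [monoSubgraph_adj, crownColoring_of_notMem hx hxL, crownColoring_of_notMem hy hyL, hxy.2]
  exact ⟨hxy.1, rfl⟩

theorem monoSubgraph_crownColoring_adj_center (h : IsCrown G k X L c) (f : V → α) {y : V}
    (hy : y ∈ L) : (monoSubgraph G (crownColoring X L c f)).Adj y (c y) := by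
  rw [monoSubgraph_adj, h.crownColoring_of_mem_leaves hy,
    crownColoring_of_mem_head (h.center_mem hy)]
  exact ⟨h.adj y hy, rfl⟩

variable [Fintype V]

theorem isBoundedColoring_crownColoring [DecidableEq α]
    (h : IsCrown G k X L c) {f : V → α} (hf : IsBoundedColoring (k + 1) f) :
    IsBoundedColoring (k + 1) (crownColoring X L c f) := by
  rintro (u | a)
  · by_cases hu : u ∈ X
    · refine (card_le_card (t := insert u {y ∈ L | c y = u}) fun x hx ↦ ?_).trans
        (h.card_leaves u hu ▸ card_insert_le _ _)
      simp only [mem_filter, mem_insert, crownColoring] at hx ⊢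
      grind
    · rw [filter_eq_empty_iff.2 fun x _ hx ↦ ?_, card_empty]
      · exact Nat.zero_le _
      have hcenter (hx : x ∈ L) := h.center_mem hx
      grind [crownColoring]
  · refine (card_le_card fun x hx ↦ ?_).trans (hf a)
    simp only [mem_filter, mem_univ, true_and, crownColoring] at hx ⊢
    grind

theorem card_edgeFinset_le_crownColoring [DecidableEq α] (h : IsCrown G k X L c) {f : V → α}
    (hf : IsBoundedColoring (k + 1) f) :
    #(monoSubgraph G f).edgeFinset ≤ #(monoSubgraph G (crownColoring X L c f)).edgeFinset := by
  let E := (monoSubgraph G f).edgeFinset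
  let stars := L.image fun y ↦ s(y, c y)
  have hdisj : Disjoint {e ∈ E | ¬∃ u ∈ X, u ∈ e} stars := by
    rw [Finset.disjoint_right]
    intro e he
    obtain ⟨y, hy, rfl⟩ := mem_image.1 he
    rw [mem_filter, not_and_not_right]
    exact fun _ ↦ ⟨c y, h.center_mem hy, Sym2.mem_mk_right y (c y)⟩
  have hsub : {e ∈ E | ¬∃ u ∈ X, u ∈ e} ∪ stars ⊆
      (monoSubgraph G (crownColoring X L c f)).edgeFinset := by
    refine union_subset (fun e he ↦ ?_) (fun e he ↦ ?_)
    · induction e with | _ x y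
      obtain ⟨hadj, hX⟩ := mem_filter.1 he
      rw [mem_edgeFinset] at hadj ⊢
      exact h.monoSubgraph_crownColoring_adj_of_notMem hadj
        (fun hx ↦ hX ⟨x, hx, Sym2.mem_mk_left x y⟩) (fun hy ↦ hX ⟨y, hy, Sym2.mem_mk_right x y⟩)
    · obtain ⟨y, hy, rfl⟩ := mem_image.1 he
      exact mem_edgeFinset.2 (h.monoSubgraph_crownColoring_adj_center f hy)
  calc #E = #{e ∈ E | ¬∃ u ∈ X, u ∈ e} + #{e ∈ E | ∃ u ∈ X, u ∈ e} := by
        rw [add_comm, card_filter_add_card_filter_not]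
    _ ≤ #{e ∈ E | ¬∃ u ∈ X, u ∈ e} + #X * k := by
        gcongr
        exact hf.card_filter_exists_mem_edgeFinset_le G X
    _ = #{e ∈ E | ¬∃ u ∈ X, u ∈ e} + #stars := by rw [h.card_image_star]
    _ = #({e ∈ E | ¬∃ u ∈ X, u ∈ e} ∪ stars) := (card_union_of_disjoint hdisj).symm
    _ ≤ #(monoSubgraph G (crownColoring X L c f)).edgeFinset := card_le_card hsub

theorem maxPVal_induce (h : IsCrown G k X L c) {s : Set V} [Fintype s] [DecidableEq s]
    (hs : ∀ x ∉ s, x ∉ X ∧ x ∉ L ∧ ∀ y, G.Adj x y → y ∈ X) :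
    maxPVal (G.induce s) (k + 1) = maxPVal G (k + 1) := by
  have hk : 1 ≤ k + 1 := Nat.le_add_left 1 k
  refine (maxPVal_mono_of_isContained ⟨Copy.induce G s⟩ hk).antisymm ?_
  obtain ⟨f, hf, hval⟩ := exists_isBoundedColoring_card_edgeFinset_eq_maxPVal G hk
  have hsupp : (monoSubgraph G (crownColoring X L c f)).support ⊆ s := by
    rintro x ⟨y, hadj, hcolor⟩
    by_contra hx
    obtain ⟨hxX, hxL, hnbr⟩ := hs x hx
    rw [crownColoring_of_notMem hxX hxL, crownColoring_of_mem_head (hnbr y hadj)] at hcolor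
    exact Sum.inr_ne_inl hcolor
  calc maxPVal G (k + 1) = #(monoSubgraph G f).edgeFinset := hval.symm
    _ ≤ #(monoSubgraph G (crownColoring X L c f)).edgeFinset :=
      h.card_edgeFinset_le_crownColoring hf
    _ ≤ maxPVal (G.induce s) (k + 1) :=
      (h.isBoundedColoring_crownColoring hf).card_edgeFinset_le_maxPVal_induce G hsupp

end IsCrown

end Crown

section Matching

variable {ι α β : Type*}

theorem exists_injOn_of_card_le_card_biUnion [DecidableEq α] [Nonempty α] {N : ι → Finset α}
    {A : Finset ι} (hall : ∀ S ⊆ A, #S ≤ #(S.biUnion N)) :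
    ∃ g : ι → α, Set.InjOn g A ∧ ∀ i ∈ A, g i ∈ N i := by
  have hall' (S : Finset A) : #S ≤ #(S.biUnion fun i ↦ N i) := by
    have h := hall (S.map (.subtype (· ∈ A))) (map_subtype_subset S)
    rwa [card_map, map_eq_image, image_biUnion] at h
  obtain ⟨g, hg, hgN⟩ := (all_card_le_biUnion_card_iff_exists_injective fun i : A ↦ N i).1 hall'
  obtain ⟨g', hg'⟩ : ∃ g' : ι → α, ∀ i : A, g' i = g i :=
    ⟨Function.extend Subtype.val g fun _ ↦ Classical.arbitrary α,
      Subtype.val_injective.extend_apply _ _⟩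
  refine ⟨g', fun i hi j hj hij ↦ ?_, fun i hi ↦ hg' ⟨i, hi⟩ ▸ hgN ⟨i, hi⟩⟩
  rw [hg' ⟨i, hi⟩, hg' ⟨j, hj⟩] at hij
  exact congrArg Subtype.val (hg hij)

theorem exists_biUnion_insert_eq_image [DecidableEq ι] [DecidableEq α] [Nonempty α]
    {N : ι → Finset α} {A : Finset ι} {i₀ : ι} {f : ι → α} (hf : Set.InjOn f A)
    (hfN : ∀ i ∈ A, f i ∈ N i)
    (hmax : ¬∃ g : ι → α, Set.InjOn g (insert i₀ A : Finset ι) ∧ ∀ i ∈ insert i₀ A, g i ∈ N i) :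
    ∃ B ⊆ A, (insert i₀ B).biUnion N = B.image f := by
  obtain ⟨S, hSA, hlt⟩ : ∃ S ⊆ insert i₀ A, #(S.biUnion N) < #S := by
    by_contra! hall
    exact hmax (exists_injOn_of_card_le_card_biUnion hall)
  have hBA : S.erase i₀ ⊆ A := subset_insert_iff.1 hSA
  have hsub : (S.erase i₀).image f ⊆ S.biUnion N := image_subset_iff.2 fun i hi ↦
    mem_biUnion.2 ⟨i, mem_of_mem_erase hi, hfN i (hBA hi)⟩
  have hcard : #((S.erase i₀).image f) = #(S.erase i₀) :=
    card_image_of_injOn (hf.mono (coe_subset.2 hBA))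
  have hi₀ : i₀ ∈ S := by
    by_contra hi₀
    rw [erase_eq_of_notMem hi₀] at hcard hsub
    exact (hcard.symm.trans_le (card_le_card hsub)).not_gt hlt
  refine ⟨S.erase i₀, hBA, ?_⟩
  rw [insert_erase hi₀]
  refine (eq_of_subset_of_card_le hsub ?_).symm
  rw [hcard, card_erase_of_mem hi₀]
  exact Nat.le_sub_one_of_lt hlt

/-- A matching, given as a finite set of pairwise disjoint edges. -/
def IsEdgeMatching (H : SimpleGraph α) (M : Finset (Sym2 α)) : Prop :=
  (∀ e ∈ M, e ∈ H.edgeSet) ∧ ∀ e ∈ M, ∀ f ∈ M, e ≠ f → ∀ x, x ∈ e → x ∉ f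

/-- A matching with the largest possible number of edges. -/
def IsMaximumMatching (H : SimpleGraph α) (M : Finset (Sym2 α)) : Prop :=
  IsEdgeMatching H M ∧ ∀ M', IsEdgeMatching H M' → #M' ≤ #M

/-- The edges of a bipartite graph joining each vertex `y ∈ A` of the right class to its partner
`f y` in the left class. -/
noncomputable def partnerEdges (f : β → α) (A : Finset β) : Finset (Sym2 (α ⊕ β)) :=
  A.image fun y ↦ s(Sum.inl (f y), Sum.inr y)

theorem mem_partnerEdges {f : β → α} {A : Finset β} {e : Sym2 (α ⊕ β)} :
    e ∈ partnerEdges f A ↔ ∃ y ∈ A, s(Sum.inl (f y), Sum.inr y) = e :=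
  mem_image

theorem card_partnerEdges (f : β → α) (A : Finset β) : #(partnerEdges f A) = #A :=
  card_image_of_injective _ fun y z h ↦ by simp_all

variable {H : SimpleGraph (α ⊕ β)} {M : Finset (Sym2 (α ⊕ β))}

theorem isEdgeMatching_partnerEdges {f : β → α} {A : Finset β} (hf : Set.InjOn f A)
    (hadj : ∀ y ∈ A, H.Adj (Sum.inl (f y)) (Sum.inr y)) : IsEdgeMatching H (partnerEdges f A) := by
  refine ⟨fun e he ↦ ?_, fun e he e' he' hne x hx hx' ↦ hne ?_⟩
  · obtain ⟨y, hy, rfl⟩ := mem_partnerEdges.1 he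
    exact hadj y hy
  · obtain ⟨y, hy, rfl⟩ := mem_partnerEdges.1 he
    obtain ⟨z, hz, rfl⟩ := mem_partnerEdges.1 he'
    have hyz : f y = f z ∨ y = z := by
      rw [Sym2.mem_iff] at hx hx'
      grind
    rw [hyz.elim (hf hy hz) id]

theorem exists_eq_inl_inr_of_mem_edgeSet (hH : H ≤ completeBipartiteGraph α β) {e : Sym2 (α ⊕ β)}
    (he : e ∈ H.edgeSet) : ∃ a y, e = s(Sum.inl a, Sum.inr y) := by
  induction e with | _ p q
  have := hH he
  rcases p with a | y <;> rcases q with b | z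
  · simp at this
  · exact ⟨a, z, rfl⟩
  · exact ⟨b, y, Sym2.eq_swap⟩
  · simp at this

theorem IsEdgeMatching.exists_eq_partnerEdges [Nonempty α] (hH : H ≤ completeBipartiteGraph α β)
    (hM : IsEdgeMatching H M) :
    ∃ (f : β → α) (A : Finset β), Set.InjOn f A ∧
      (∀ y ∈ A, H.Adj (Sum.inl (f y)) (Sum.inr y)) ∧ M = partnerEdges f A := by
  have hpair (e) (he : e ∈ M) : ∃ a y, e = s(Sum.inl a, Sum.inr y) :=
    exists_eq_inl_inr_of_mem_edgeSet hH (hM.1 e he)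
  have hunique {e e'} (he : e ∈ M) (he' : e' ∈ M) {x} (hx : x ∈ e) (hx' : x ∈ e') : e = e' := by
    by_contra hne
    exact hM.2 e he e' he' hne x hx hx'
  let A : Finset β := (M.biUnion Sym2.toFinset).toRight
  have hA (y : β) : y ∈ A ↔ ∃ a, s(Sum.inl a, Sum.inr y) ∈ M := by
    simp only [A, mem_toRight, mem_biUnion, Sym2.mem_toFinset]
    constructor
    · rintro ⟨e, he, hy⟩
      obtain ⟨a, z, rfl⟩ := hpair e he
      obtain rfl : y = z := by simpa using hy
      exact ⟨a, he⟩
    · exact fun ⟨a, ha⟩ ↦ ⟨_, ha, Sym2.mem_mk_right _ _⟩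
  choose! f hf using fun y ↦ (hA y).1
  refine ⟨f, A, fun y hy z hz hyz ↦ ?_, fun y hy ↦ hM.1 _ (hf y hy), ?_⟩
  · have := hunique (hf y hy) (hf z hz) (Sym2.mem_mk_left _ _) (hyz ▸ Sym2.mem_mk_left _ _)
    simpa [hyz] using this
  · ext e
    rw [mem_partnerEdges]
    constructor
    · intro he
      obtain ⟨a, y, rfl⟩ := hpair e he
      have hy := (hA y).2 ⟨a, he⟩
      exact ⟨y, hy, hunique (hf y hy) he (Sym2.mem_mk_right _ _) (Sym2.mem_mk_right _ _)⟩
    · rintro ⟨y, hy, rfl⟩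
      exact hf y hy

theorem IsMaximumMatching.exists_closed_set [Finite α] [Nonempty α]
    (hH : H ≤ completeBipartiteGraph α β) (hM : IsMaximumMatching H M) {w : β}
    (hw : ∀ e ∈ M, Sum.inr w ∉ e) :
    ∃ (f : β → α) (B : Finset β), Set.InjOn f B ∧ w ∉ B ∧
      (∀ y ∈ B, H.Adj (Sum.inl (f y)) (Sum.inr y)) ∧
      ∀ y ∈ insert w (B : Set β), ∀ a, H.Adj (Sum.inl a) (Sum.inr y) → a ∈ f '' B := by
  have := Fintype.ofFinite α
  obtain ⟨f, A, hf, hadj, rfl⟩ := hM.1.exists_eq_partnerEdges hH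
  have hwA : w ∉ A := fun h ↦ hw _ (mem_partnerEdges.2 ⟨w, h, rfl⟩) (Sym2.mem_mk_right _ _)
  let N (y : β) : Finset α := {a | H.Adj (Sum.inl a) (Sum.inr y)}
  have hmemN {a : α} {y : β} : a ∈ N y ↔ H.Adj (Sum.inl a) (Sum.inr y) := mem_filter_univ a
  have hmax : ¬∃ g : β → α, Set.InjOn g (insert w A : Finset β) ∧ ∀ y ∈ insert w A, g y ∈ N y := by
    rintro ⟨g, hg, hgN⟩
    have hle := hM.2 _ (isEdgeMatching_partnerEdges hg fun y hy ↦ hmemN.1 (hgN y hy))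
    rw [card_partnerEdges, card_partnerEdges, card_insert_of_notMem hwA] at hle
    exact Nat.not_succ_le_self _ hle
  obtain ⟨B, hBA, hB⟩ :=
    exists_biUnion_insert_eq_image hf (fun y hy ↦ hmemN.2 (hadj y hy)) hmax
  refine ⟨f, B, hf.mono (coe_subset.2 hBA), fun h ↦ hwA (hBA h), fun y hy ↦ hadj y (hBA hy),
    fun y hy a ha ↦ ?_⟩
  rw [← coe_image, ← hB]
  exact mem_biUnion.2 ⟨y, by simpa using hy, hmemN.2 ha⟩

end Matching

theorem card_filter_fst_eq_of_injOn {α β ι : Type*} [DecidableEq α] {f : β → α × ι} {B : Finset β}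
    {T : Finset ι} {u : α} (hf : Set.InjOn f B) (hu : ∀ ℓ ∈ T, (u, ℓ) ∈ f '' B) :
    #{y ∈ B | (f y).2 ∈ T ∧ (f y).1 = u} = #T := by
  refine card_nbij (fun y ↦ (f y).2) (fun y hy ↦ (mem_filter.1 hy).2.1) ?_ fun ℓ hℓ ↦ ?_
  · intro y hy z hz hyz
    rw [mem_coe, mem_filter] at hy hz
    exact hf hy.1 hz.1 (Prod.ext (hy.2.2.trans hz.2.2.symm) hyz)
  · obtain ⟨y, hy, hfy⟩ := hu ℓ hℓ
    exact ⟨y, by simpa [hfy] using ⟨hy, hℓ⟩, by simp [hfy]⟩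

theorem IsMaximumMatching.exists_isCrown {V ι : Type*} [Finite V] [Fintype ι] [DecidableEq V]
    {G : SimpleGraph V} {U : Finset V} {H : SimpleGraph ((V × ι) ⊕ V)}
    {M : Finset (Sym2 ((V × ι) ⊕ V))} {w : V} {k : ℕ} (hU : G.IsVertexCover U)
    (hbip : H ≤ completeBipartiteGraph (V × ι) V)
    (hH : ∀ u ℓ y, H.Adj (Sum.inl (u, ℓ)) (Sum.inr y) ↔ u ∈ U ∧ y ∉ U ∧ G.Adj u y)
    (hM : IsMaximumMatching H M) (hw : w ∉ U) (hwM : ∀ e ∈ M, Sum.inr w ∉ e)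
    (hk : k ≤ Fintype.card ι) :
    ∃ X L c, IsCrown G k X L c ∧ w ∉ X ∧ w ∉ L ∧ ∀ y, G.Adj w y → y ∈ X := by
  rcases isEmpty_or_nonempty ι with hι | hι
  · obtain rfl : k = 0 := by simpa using hk
    exact ⟨U, ∅, id, ⟨disjoint_empty_right U, by simp, by simp, by simp⟩, hw, notMem_empty w,
      fun y hy ↦ (hU hy).resolve_left hw⟩
  have : Nonempty (V × ι) := ⟨w, hι.some⟩
  obtain ⟨f, B, hf, hwB, hadj, hclosed⟩ := hM.exists_closed_set hbip hwM
  obtain ⟨T, -, hT⟩ := exists_subset_card_eq (s := (univ : Finset ι)) hk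
  have hBadj (y) (hy : y ∈ B) : (f y).1 ∈ U ∧ y ∉ U ∧ G.Adj (f y).1 y := (hH _ _ _).1 (hadj y hy)
  have hBU (y) (hy : y ∈ insert w (B : Set V)) : y ∉ U := by
    rcases hy with rfl | hy
    exacts [hw, (hBadj y hy).2.1]
  let X : Finset V := {u ∈ U | ∃ y ∈ insert w (B : Set V), G.Adj u y}
  have hnbr (y) (hy : y ∈ insert w (B : Set V)) (x) (hx : G.Adj y x) : x ∈ X :=
    mem_filter.2 ⟨(hU hx).resolve_left (hBU y hy), y, hy, hx.symm⟩
  have hslots (u) (hu : u ∈ X) (ℓ : ι) : (u, ℓ) ∈ f '' B := by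
    obtain ⟨huU, y, hy, huy⟩ := mem_filter.1 hu
    exact hclosed y hy (u, ℓ) ((hH _ _ _).2 ⟨huU, hBU y hy, huy⟩)
  have hcrown : IsCrown G k X {y ∈ B | (f y).2 ∈ T} fun y ↦ (f y).1 :=
    { disjoint := Finset.disjoint_left.2 fun u hu huB ↦
        (hBadj u (mem_filter.1 huB).1).2.1 (mem_filter.1 hu).1
      adj := fun y hy ↦ (hBadj y (mem_filter.1 hy).1).2.2.symm
      mem_of_adj := fun y hy ↦ hnbr y (.inr (mem_filter.1 hy).1)
      card_leaves := fun u hu ↦ by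
        rw [filter_filter, card_filter_fst_eq_of_injOn hf fun ℓ _ ↦ hslots u hu ℓ, hT] }
  exact ⟨X, _, _, hcrown, fun h ↦ hw (mem_filter.1 h).1, fun h ↦ hwB (mem_filter.1 h).1,
    hnbr w (.inl rfl)⟩

theorem stmt4_general {V : Type*} [Fintype V] [DecidableEq V] (G : SimpleGraph V)
    (C : ℕ) (hC : 1 ≤ C)
    (U : Finset V) (hU : G.IsVertexCover U)
    (t : ℕ) (ht : C ≤ t + 1)
    (H : SimpleGraph ((V × Fin t) ⊕ V))
    (hH : ∀ a b : (V × Fin t) ⊕ V, H.Adj a b ↔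
      ∃ u ∈ U, ∃ ℓ : Fin t, ∃ y ∈ Finset.univ \ U, G.Adj u y ∧
        ((a = Sum.inl (u, ℓ) ∧ b = Sum.inr y) ∨ (a = Sum.inr y ∧ b = Sum.inl (u, ℓ))))
    (M : Finset (Sym2 ((V × Fin t) ⊕ V))) (hM : IsMaximumMatching H M)
    (w : V) (hw : w ∉ U) (hwM : ∀ e ∈ M, (Sum.inr w : (V × Fin t) ⊕ V) ∉ e) :
    maxPVal G C = maxPVal (G.induce {x : V | x ≠ w}) C := by
  obtain ⟨k, rfl⟩ := Nat.exists_eq_add_of_le' hC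
  have hbip : H ≤ completeBipartiteGraph (V × Fin t) V := fun a b hab ↦ by
    obtain ⟨u, -, ℓ, y, -, -, ⟨rfl, rfl⟩ | ⟨rfl, rfl⟩⟩ := (hH a b).1 hab <;> simp
  have hslot (u ℓ y) : H.Adj (Sum.inl (u, ℓ)) (Sum.inr y) ↔ u ∈ U ∧ y ∉ U ∧ G.Adj u y := by
    simp [hH]
  have hk : k ≤ Fintype.card (Fin t) := by rw [Fintype.card_fin]; lia
  obtain ⟨X, L, c, hcrown, hwX, hwL, hnbr⟩ := hM.exists_isCrown hU hbip hslot hw hwM hk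
  refine (hcrown.maxPVal_induce fun x hx ↦ ?_).symm
  obtain rfl : x = w := not_not.1 hx
  exact ⟨hwX, hwL, hnbr⟩

/-- Safeness of the reduction rule: deleting a vertex of `I = V ∖ U` left
unmatched by a maximum matching of the auxiliary bipartite graph `H` does not
change the maximum value of a 𝒞-partition. -/
theorem stmt4 {V : Type*} [Fintype V] [DecidableEq V] (G : SimpleGraph V)
    (C : ℕ) (hC : 1 ≤ C)
    (U : Finset V) (hU : ∀ u v : V, G.Adj u v → u ∈ U ∨ v ∈ U)
    (t : ℕ) (ht : t = U.card * C + C)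
    (H : SimpleGraph ((V × Fin t) ⊕ V))
    (hH : ∀ a b : (V × Fin t) ⊕ V, H.Adj a b ↔
      ∃ u ∈ U, ∃ ℓ : Fin t, ∃ y ∈ Finset.univ \ U, G.Adj u y ∧
        ((a = Sum.inl (u, ℓ) ∧ b = Sum.inr y) ∨ (a = Sum.inr y ∧ b = Sum.inl (u, ℓ))))
    (M : Finset (Sym2 ((V × Fin t) ⊕ V)))
    (hMedges : ∀ e ∈ M, e ∈ H.edgeSet)
    (hMdisj : ∀ e ∈ M, ∀ f ∈ M, e ≠ f → ∀ x, x ∈ e → x ∉ f)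
    (hMmax : ∀ M' : Finset (Sym2 ((V × Fin t) ⊕ V)),
      (∀ e ∈ M', e ∈ H.edgeSet) →
      (∀ e ∈ M', ∀ f ∈ M', e ≠ f → ∀ x, x ∈ e → x ∉ f) → M'.card ≤ M.card)
    (w : V) (hw : w ∉ U) (hwM : ∀ e ∈ M, (Sum.inr w : (V × Fin t) ⊕ V) ∉ e) :
    sSup {v : ℕ | ∃ P : Finpartition (Finset.univ : Finset V),
        (∀ Q ∈ P.parts, Q.card ≤ C) ∧ pVal G P = v} =
    sSup {v : ℕ | ∃ P : Finpartition (Finset.univ : Finset {x : V // x ≠ w}),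
        (∀ Q ∈ P.parts, Q.card ≤ C) ∧
        pVal (G.induce {x : V | x ≠ w}) P = v} := by
  exact stmt4_general G C hC U hU t (by lia) H hH M
    ⟨⟨hMedges, hMdisj⟩, fun M' h ↦ hMmax M' h.1 h.2⟩ w hw hwM
end

section
/- A finite simple graph G on n vertices admits a partition of its vertex set into parts each inducing a triangle (a clique on 3 vertices) if and only if G admits a 3-partition of value at least n. -/
open scoped Classical

/-!
A part with `c ≤ k` vertices contains at most `c (c - 1) / 2 ≤ c (k - 1) / 2` edges, and for `c > 0`
equality holds exactly when the part is a clique on `k` vertices. Summing over the parts, a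
`k`-partition has value at most `n (k - 1) / 2`, attained exactly when every part is a `k`-clique.
For `k = 3` the bound is `n`.
-/

section

variable {V : Type*} [DecidableEq V] (G : SimpleGraph V) {Q : Finset V} {k : ℕ}

theorem mk_mem_image_offDiag_iff {u v : V} :
    s(u, v) ∈ Q.offDiag.image Sym2.mk.uncurry ↔ u ∈ Q ∧ v ∈ Q ∧ u ≠ v := by
  simp only [Finset.mem_image, Finset.mem_offDiag, Prod.exists, Function.uncurry_apply_pair,
    Sym2.eq_iff]
  grind

theorem partVal_eq_card_filter_image_offDiag :
    partVal G Q = ((Q.offDiag.image Sym2.mk.uncurry).filter (· ∈ G.edgeSet)).card := by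
  unfold partVal
  congr 1
  ext e
  induction e using Sym2.ind with
  | _ u v =>
    rw [Finset.mem_filter, Finset.mem_filter, and_congr_left_iff]
    intro huv
    rw [Finset.mk_mem_sym2_iff, mk_mem_image_offDiag_iff]
    exact and_congr_right fun _ => (and_iff_left (G.ne_of_adj huv)).symm

theorem partVal_le_choose_two : partVal G Q ≤ Q.card.choose 2 := by
  rw [partVal_eq_card_filter_image_offDiag, ← Sym2.card_image_offDiag]
  exact Finset.card_filter_le _ _

theorem partVal_eq_choose_two_iff_isClique :
    partVal G Q = Q.card.choose 2 ↔ G.IsClique Q := by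
  rw [partVal_eq_card_filter_image_offDiag, ← Sym2.card_image_offDiag, Finset.card_filter_eq_iff,
    Finset.forall_mem_image]
  simp only [Prod.forall, Finset.mem_offDiag, Function.uncurry_apply_pair,
    SimpleGraph.mem_edgeSet, SimpleGraph.isClique_iff, Set.Pairwise, Finset.mem_coe]
  grind

theorem two_mul_choose_two (n : ℕ) : 2 * n.choose 2 = (n - 1) * n := by
  rw [Nat.choose_two_right, Nat.mul_div_cancel' n.even_mul_pred_self.two_dvd, mul_comm]

theorem two_mul_partVal_le (hQ : Q.card ≤ k) : 2 * partVal G Q ≤ (k - 1) * Q.card :=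
  calc
    2 * partVal G Q ≤ 2 * Q.card.choose 2 := by gcongr; exact partVal_le_choose_two G
    _ = (Q.card - 1) * Q.card := two_mul_choose_two _
    _ ≤ (k - 1) * Q.card := by gcongr

theorem two_mul_partVal_eq_iff_isNClique (hne : Q.Nonempty) (hQ : Q.card ≤ k) :
    2 * partVal G Q = (k - 1) * Q.card ↔ G.IsNClique k Q := by
  have hpos : 0 < Q.card := hne.card_pos
  rw [SimpleGraph.isNClique_iff, ← partVal_eq_choose_two_iff_isClique]
  constructor
  · intro h
    have hle : (k - 1) * Q.card ≤ (Q.card - 1) * Q.card := by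
      rw [← h, ← two_mul_choose_two]
      exact Nat.mul_le_mul_left 2 (partVal_le_choose_two G)
    have hcard : Q.card = k := by
      have : k - 1 ≤ Q.card - 1 := Nat.le_of_mul_le_mul_right hle hpos
      omega
    refine ⟨Nat.eq_of_mul_eq_mul_left two_pos ?_, hcard⟩
    rw [h, two_mul_choose_two, hcard]
  · rintro ⟨hval, rfl⟩
    rw [hval, two_mul_choose_two]

end

section

variable {V : Type*} [DecidableEq V]

theorem mul_card_eq_sum_mul_card_parts {s : Finset V} (P : Finpartition s) (m : ℕ) :
    m * s.card = ∑ Q ∈ P.parts, m * Q.card := by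
  rw [← Finset.mul_sum, P.sum_card_parts]

variable [Fintype V] (G : SimpleGraph V) {P : Finpartition (Finset.univ : Finset V)} {k : ℕ}

theorem two_mul_pVal_le (hP : ∀ Q ∈ P.parts, Q.card ≤ k) :
    2 * pVal G P ≤ (k - 1) * Fintype.card V := by
  rw [pVal, Finset.mul_sum, ← Finset.card_univ, mul_card_eq_sum_mul_card_parts P]
  exact Finset.sum_le_sum fun Q hQ => two_mul_partVal_le G (hP Q hQ)

theorem two_mul_pVal_eq_iff_forall_isNClique (hP : ∀ Q ∈ P.parts, Q.card ≤ k) :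
    2 * pVal G P = (k - 1) * Fintype.card V ↔ ∀ Q ∈ P.parts, G.IsNClique k Q := by
  rw [pVal, Finset.mul_sum, ← Finset.card_univ, mul_card_eq_sum_mul_card_parts P,
    Finset.sum_eq_sum_iff_of_le fun Q hQ => two_mul_partVal_le G (hP Q hQ)]
  exact forall₂_congr fun Q hQ =>
    two_mul_partVal_eq_iff_isNClique G (P.nonempty_of_mem_parts hQ) (hP Q hQ)

end

/-- The truncated `k - 1` is harmless: for `k = 0` both sides say that `V` is empty. -/
theorem stmt13_general {V : Type*} [Fintype V] [DecidableEq V] (G : SimpleGraph V)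
    (P : Finpartition (Finset.univ : Finset V)) (k : ℕ) :
    (∀ Q ∈ P.parts, G.IsNClique k Q) ↔
      (∀ Q ∈ P.parts, Q.card ≤ k) ∧ (k - 1) * Fintype.card V ≤ 2 * pVal G P := by
  constructor
  · intro hclique
    have hcard : ∀ Q ∈ P.parts, Q.card ≤ k := fun Q hQ => (hclique Q hQ).card_eq.le
    exact ⟨hcard, ((two_mul_pVal_eq_iff_forall_isNClique G hcard).2 hclique).ge⟩
  · rintro ⟨hcard, hval⟩
    exact (two_mul_pVal_eq_iff_forall_isNClique G hcard).1
      (le_antisymm (two_mul_pVal_le G hcard) hval)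

/-- A graph on `n` vertices admits a partition into triangles iff it admits a
3-partition of value at least `n`. -/
theorem stmt13 {V : Type*} [Fintype V] [DecidableEq V] (G : SimpleGraph V) :
    (∃ P : Finpartition (Finset.univ : Finset V),
      ∀ Q ∈ P.parts, Q.card = 3 ∧ ∀ u ∈ Q, ∀ v ∈ Q, u ≠ v → G.Adj u v) ↔
    (∃ P : Finpartition (Finset.univ : Finset V),
      (∀ Q ∈ P.parts, Q.card ≤ 3) ∧ Fintype.card V ≤ pVal G P) := by
  simpa [SimpleGraph.isNClique_iff, SimpleGraph.isClique_iff, Set.Pairwise, and_comm] using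
    exists_congr fun P => stmt13_general G P 3
end
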